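/- arXiv:0906.4152 — 4 statements merged into one kernel-verified Lean document; each statement's English description precedes it below -/
import Mathlib

section
/- Consider a commutative ladder of abelian groups: a top row A₁ →f₁ A₂ →f₂ A₃ →f₃ A₄ →f₄ A₅ and a bottom row B₁ →h₁ B₂ →h₂ B₃ →h₃ B₄ →h₄ B₅ of group homomorphisms, with vertical homomorphisms i₁, i₂, i₃, i₄, i₅ making all four squares commute. Assume the top row is exact at A₂, A₃ and A₄, the bottom row is exact at B₂, B₃ and B₄, that i₁ and i₄ are bijective, and that i₂ and i₅ are injective. Then: (a) the homomorphism h₂ induces a group isomorphism B₂/im(i₂) → B₃/im(i₃) sending the class of b to the class of h₂(b); and (b) if the injection i₂ admits a retraction (equivalently, the short exact sequence 0 → A₂ → B₂ → B₂/im(i₂) → 0 splits), then the injection i₃ admits a retraction (equivalently, 0 → A₃ → B₃ → B₃/im(i₃) → 0 splits). -/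
/-!
The central square `A₂ → A₃`, `B₂ → B₃` of the ladder is a pushout: by diagram chases in the style
of the four lemma, `A₂ → A₃ ⊕ B₂ → B₃ → 0` is exact. A pushout square induces an isomorphism on the
cokernels of its parallel sides, and a retraction `r` of `i₂` gives the retraction of `i₃` that the
universal property produces from `id : A₃ → A₃` and `f₂ ∘ r : B₂ → A₃`.
-/

section CocartesianSquare

variable {A B C D E : Type*} [AddCommGroup A] [AddCommGroup B] [AddCommGroup C] [AddCommGroup D]
  [AddCommGroup E] {f : A →+ C} {i : A →+ B} {j : C →+ D} {h : B →+ D}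

/-- The square with top `f : A → C`, left side `i : A → B`, right side `j : C → D` and bottom
`h : B → D` is a pushout of abelian groups. It is encoded elementwise as the exactness of
`A → C ⊕ B → D → 0`, where the maps are `a ↦ (f a, -i a)` and `(c, b) ↦ j c + h b`; the universal
property is `IsCocartesianSquare.exists_desc`. -/
structure IsCocartesianSquare (f : A →+ C) (i : A →+ B) (j : C →+ D) (h : B →+ D) : Prop where
  comm : j.comp f = h.comp i
  exists_add_eq : ∀ d, ∃ c b, j c + h b = d
  exists_lift_of_eq : ∀ c b, j c = h b → ∃ a, f a = c ∧ i a = b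

namespace IsCocartesianSquare

theorem exists_desc (sq : IsCocartesianSquare f i j h) (u : C →+ E) (v : B →+ E)
    (huv : u.comp f = v.comp i) : ∃ w : D →+ E, w.comp j = u ∧ w.comp h = v := by
  have coprod_surjective : Function.Surjective (j.coprod h) := fun d => by
    obtain ⟨c, b, hd⟩ := sq.exists_add_eq d
    exact ⟨(c, b), hd⟩
  have ker_le : (j.coprod h).ker ≤ (u.coprod v).ker := by
    rintro ⟨c, b⟩ (hcb : j c + h b = 0)
    obtain ⟨a, rfl, ha⟩ := sq.exists_lift_of_eq c (-b)
      ((eq_neg_of_add_eq_zero_left hcb).trans (map_neg h b).symm)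
    have huva : u (f a) = v (i a) := DFunLike.congr_fun huv a
    change u (f a) + v b = 0
    rw [huva, ha, map_neg, neg_add_cancel]
  let w : D →+ E := (j.coprod h).liftOfSurjective coprod_surjective ⟨u.coprod v, ker_le⟩
  have w_coprod : w.comp (j.coprod h) = u.coprod v :=
    (j.coprod h).liftOfRightInverse_comp _ _ ⟨u.coprod v, ker_le⟩
  refine ⟨w, ?_, ?_⟩
  · rw [← j.coprod_comp_inl h, ← AddMonoidHom.comp_assoc, w_coprod, AddMonoidHom.coprod_comp_inl]
  · rw [← j.coprod_comp_inr h, ← AddMonoidHom.comp_assoc, w_coprod, AddMonoidHom.coprod_comp_inr]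

theorem exists_retraction (sq : IsCocartesianSquare f i j h) {r : B →+ A}
    (hr : r.comp i = AddMonoidHom.id A) : ∃ s : D →+ C, s.comp j = AddMonoidHom.id C := by
  have id_comp_eq : (AddMonoidHom.id C).comp f = (f.comp r).comp i := by
    rw [AddMonoidHom.comp_assoc, hr, AddMonoidHom.id_comp, AddMonoidHom.comp_id]
  obtain ⟨s, hs, -⟩ := sq.exists_desc (AddMonoidHom.id C) (f.comp r) id_comp_eq
  exact ⟨s, hs⟩

theorem range_le_comap_range (sq : IsCocartesianSquare f i j h) :
    i.range ≤ j.range.comap h := by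
  rintro _ ⟨a, rfl⟩
  exact ⟨f a, DFunLike.congr_fun sq.comm a⟩

theorem quotientMap_bijective (sq : IsCocartesianSquare f i j h) :
    Function.Bijective (QuotientAddGroup.map i.range j.range h sq.range_le_comap_range) := by
  constructor
  · rw [injective_iff_map_eq_zero]
    intro x hx
    obtain ⟨b, rfl⟩ := QuotientAddGroup.mk_surjective x
    obtain ⟨c, hc⟩ := (QuotientAddGroup.eq_zero_iff (h b)).mp hx
    obtain ⟨a, -, ha⟩ := sq.exists_lift_of_eq c b hc
    exact (QuotientAddGroup.eq_zero_iff b).mpr ⟨a, ha⟩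
  · intro y
    obtain ⟨d, rfl⟩ := QuotientAddGroup.mk_surjective y
    obtain ⟨c, b, rfl⟩ := sq.exists_add_eq d
    refine ⟨b, QuotientAddGroup.eq.mpr ⟨c, ?_⟩⟩
    abel

/-- The isomorphism `B / im i ≃ D / im j` between the cokernels of the parallel sides `i` and `j`
of a pushout square, induced by its bottom map `h`. -/
noncomputable def quotientEquiv (sq : IsCocartesianSquare f i j h) :
    B ⧸ i.range ≃+ D ⧸ j.range :=
  AddEquiv.ofBijective _ sq.quotientMap_bijective

theorem quotientEquiv_mk (sq : IsCocartesianSquare f i j h) (b : B) :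
    sq.quotientEquiv (QuotientAddGroup.mk b) = QuotientAddGroup.mk (h b) :=
  rfl

end IsCocartesianSquare

end CocartesianSquare

section Ladder

variable {A₁ A₂ A₃ A₄ A₅ B₁ B₂ B₃ B₄ B₅ : Type*}
  [AddCommGroup A₁] [AddCommGroup A₂] [AddCommGroup A₃] [AddCommGroup A₄] [AddCommGroup A₅]
  [AddCommGroup B₁] [AddCommGroup B₂] [AddCommGroup B₃] [AddCommGroup B₄] [AddCommGroup B₅]
  {f₁ : A₁ →+ A₂} {f₂ : A₂ →+ A₃} {f₃ : A₃ →+ A₄} {f₄ : A₄ →+ A₅}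
  {h₁ : B₁ →+ B₂} {h₂ : B₂ →+ B₃} {h₃ : B₃ →+ B₄} {h₄ : B₄ →+ B₅}
  {i₁ : A₁ →+ B₁} {i₂ : A₂ →+ B₂} {i₃ : A₃ →+ B₃} {i₄ : A₄ →+ B₄} {i₅ : A₅ →+ B₅}

theorem exists_add_eq_of_ladder
    (sq₃ : i₄.comp f₃ = h₃.comp i₃) (sq₄ : i₅.comp f₄ = h₄.comp i₄)
    (exA₄ : f₄.ker ≤ f₃.range) (exB₃ : h₃.ker ≤ h₂.range) (exB₄ : h₃.range ≤ h₄.ker)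
    (hi₄ : Function.Surjective i₄) (hi₅ : Function.Injective i₅) (b₃ : B₃) :
    ∃ a₃ b₂, i₃ a₃ + h₂ b₂ = b₃ := by
  obtain ⟨a₄, ha₄⟩ := hi₄ (h₃ b₃)
  have f₄_a₄ : f₄ a₄ = 0 := hi₅ <| calc
    i₅ (f₄ a₄) = h₄ (i₄ a₄) := DFunLike.congr_fun sq₄ a₄
    _ = h₄ (h₃ b₃) := by rw [ha₄]
    _ = 0 := exB₄ ⟨b₃, rfl⟩
    _ = i₅ 0 := (map_zero i₅).symm
  obtain ⟨a₃, rfl⟩ := exA₄ f₄_a₄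
  have h₃_i₃ : h₃ (i₃ a₃) = h₃ b₃ := (DFunLike.congr_fun sq₃ a₃).symm.trans ha₄
  have h₃_sub : h₃ (b₃ - i₃ a₃) = 0 := by rw [map_sub, h₃_i₃, sub_self]
  obtain ⟨b₂, hb₂⟩ := exB₃ h₃_sub
  exact ⟨a₃, b₂, by rw [hb₂, add_sub_cancel]⟩

theorem exists_lift_of_eq_of_ladder
    (sq₁ : i₂.comp f₁ = h₁.comp i₁) (sq₂ : i₃.comp f₂ = h₂.comp i₂)
    (sq₃ : i₄.comp f₃ = h₃.comp i₃)
    (exA₂ : f₁.range ≤ f₂.ker) (exA₃ : f₃.ker ≤ f₂.range)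
    (exB₂ : h₂.ker ≤ h₁.range) (exB₃ : h₂.range ≤ h₃.ker)
    (hi₁ : Function.Surjective i₁) (hi₄ : Function.Injective i₄)
    {a₃ : A₃} {b₂ : B₂} (hab : i₃ a₃ = h₂ b₂) :
    ∃ a₂, f₂ a₂ = a₃ ∧ i₂ a₂ = b₂ := by
  have f₃_a₃ : f₃ a₃ = 0 := hi₄ <| calc
    i₄ (f₃ a₃) = h₃ (i₃ a₃) := DFunLike.congr_fun sq₃ a₃
    _ = h₃ (h₂ b₂) := by rw [hab]
    _ = 0 := exB₃ ⟨b₂, rfl⟩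
    _ = i₄ 0 := (map_zero i₄).symm
  obtain ⟨a₂, rfl⟩ := exA₃ f₃_a₃
  have h₂_i₂ : h₂ (i₂ a₂) = h₂ b₂ := (DFunLike.congr_fun sq₂ a₂).symm.trans hab
  have h₂_sub : h₂ (b₂ - i₂ a₂) = 0 := by rw [map_sub, h₂_i₂, sub_self]
  obtain ⟨b₁, hb₁⟩ := exB₂ h₂_sub
  obtain ⟨a₁, rfl⟩ := hi₁ b₁
  have i₂_f₁ : i₂ (f₁ a₁) = b₂ - i₂ a₂ := (DFunLike.congr_fun sq₁ a₁).trans hb₁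
  have f₂_f₁ : f₂ (f₁ a₁) = 0 := exA₂ ⟨a₁, rfl⟩
  exact ⟨a₂ + f₁ a₁, by rw [map_add, f₂_f₁, add_zero], by rw [map_add, i₂_f₁, add_sub_cancel]⟩

theorem isCocartesianSquare_of_ladder
    (sq₁ : i₂.comp f₁ = h₁.comp i₁) (sq₂ : i₃.comp f₂ = h₂.comp i₂)
    (sq₃ : i₄.comp f₃ = h₃.comp i₃) (sq₄ : i₅.comp f₄ = h₄.comp i₄)
    (exA₂ : f₁.range ≤ f₂.ker) (exA₃ : f₃.ker ≤ f₂.range) (exA₄ : f₄.ker ≤ f₃.range)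
    (exB₂ : h₂.ker ≤ h₁.range) (exB₃ : h₂.range = h₃.ker) (exB₄ : h₃.range ≤ h₄.ker)
    (hi₁ : Function.Surjective i₁) (hi₄ : Function.Bijective i₄)
    (hi₅ : Function.Injective i₅) :
    IsCocartesianSquare f₂ i₂ i₃ h₂ where
  comm := sq₂
  exists_add_eq := exists_add_eq_of_ladder sq₃ sq₄ exA₄ exB₃.ge exB₄ hi₄.surjective hi₅
  exists_lift_of_eq _ _ :=
    exists_lift_of_eq_of_ladder sq₁ sq₂ sq₃ exA₂ exA₃ exB₂ exB₃.le hi₁ hi₄.injective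

theorem ladder_quotient_iso_and_split_general
    (sq₁ : i₂.comp f₁ = h₁.comp i₁) (sq₂ : i₃.comp f₂ = h₂.comp i₂)
    (sq₃ : i₄.comp f₃ = h₃.comp i₃) (sq₄ : i₅.comp f₄ = h₄.comp i₄)
    (exA₂ : f₁.range ≤ f₂.ker) (exA₃ : f₃.ker ≤ f₂.range) (exA₄ : f₄.ker ≤ f₃.range)
    (exB₂ : h₂.ker ≤ h₁.range) (exB₃ : h₂.range = h₃.ker) (exB₄ : h₃.range ≤ h₄.ker)
    (hi₁ : Function.Surjective i₁) (hi₄ : Function.Bijective i₄)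
    (hi₅ : Function.Injective i₅) :
    (∃ e : (B₂ ⧸ i₂.range) ≃+ (B₃ ⧸ i₃.range),
        ∀ b : B₂, e (QuotientAddGroup.mk b) = QuotientAddGroup.mk (h₂ b)) ∧
    ((∃ r : B₂ →+ A₂, r.comp i₂ = AddMonoidHom.id A₂) →
      ∃ r : B₃ →+ A₃, r.comp i₃ = AddMonoidHom.id A₃) := by
  have sq : IsCocartesianSquare f₂ i₂ i₃ h₂ :=
    isCocartesianSquare_of_ladder sq₁ sq₂ sq₃ sq₄ exA₂ exA₃ exA₄ exB₂ exB₃ exB₄ hi₁ hi₄ hi₅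
  exact ⟨⟨sq.quotientEquiv, sq.quotientEquiv_mk⟩, fun ⟨_, hr⟩ => sq.exists_retraction hr⟩

end Ladder

/-- Lemma 7(ii): in a commutative ladder of abelian groups with the top row exact
at `A₂`, `A₃`, `A₄` and the bottom row exact at `B₂`, `B₃`, `B₄`, with `i₁`, `i₄`
bijective and `i₂`, `i₅` injective:
(a) `h₂` induces an isomorphism `B₂/im i₂ ≃ B₃/im i₃` sending `[b]` to `[h₂ b]`;
(b) if `i₂` admits a retraction (i.e. `0 → A₂ → B₂ → B₂/im i₂ → 0` splits), then
`i₃` admits a retraction (i.e. `0 → A₃ → B₃ → B₃/im i₃ → 0` splits). -/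
theorem ladder_quotient_iso_and_split
    {A₁ A₂ A₃ A₄ A₅ B₁ B₂ B₃ B₄ B₅ : Type*}
    [AddCommGroup A₁] [AddCommGroup A₂] [AddCommGroup A₃] [AddCommGroup A₄]
    [AddCommGroup A₅]
    [AddCommGroup B₁] [AddCommGroup B₂] [AddCommGroup B₃] [AddCommGroup B₄]
    [AddCommGroup B₅]
    (f₁ : A₁ →+ A₂) (f₂ : A₂ →+ A₃) (f₃ : A₃ →+ A₄) (f₄ : A₄ →+ A₅)
    (h₁ : B₁ →+ B₂) (h₂ : B₂ →+ B₃) (h₃ : B₃ →+ B₄) (h₄ : B₄ →+ B₅)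
    (i₁ : A₁ →+ B₁) (i₂ : A₂ →+ B₂) (i₃ : A₃ →+ B₃) (i₄ : A₄ →+ B₄)
    (i₅ : A₅ →+ B₅)
    (sq₁ : i₂.comp f₁ = h₁.comp i₁)
    (sq₂ : i₃.comp f₂ = h₂.comp i₂)
    (sq₃ : i₄.comp f₃ = h₃.comp i₃)
    (sq₄ : i₅.comp f₄ = h₄.comp i₄)
    (exA₂ : f₁.range = f₂.ker)
    (exA₃ : f₂.range = f₃.ker)
    (exA₄ : f₃.range = f₄.ker)
    (exB₂ : h₁.range = h₂.ker)
    (exB₃ : h₂.range = h₃.ker)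
    (exB₄ : h₃.range = h₄.ker)
    (hi₁ : Function.Bijective i₁)
    (hi₄ : Function.Bijective i₄)
    (hi₂ : Function.Injective i₂)
    (hi₅ : Function.Injective i₅) :
    (∃ e : (B₂ ⧸ i₂.range) ≃+ (B₃ ⧸ i₃.range),
        ∀ b : B₂, e (QuotientAddGroup.mk b) = QuotientAddGroup.mk (h₂ b)) ∧
    ((∃ r : B₂ →+ A₂, r.comp i₂ = AddMonoidHom.id A₂) →
      ∃ r : B₃ →+ A₃, r.comp i₃ = AddMonoidHom.id A₃) :=
  ladder_quotient_iso_and_split_general sq₁ sq₂ sq₃ sq₄ exA₂.le exA₃.ge exA₄.ge exB₂.ge exB₃ exB₄.le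
    hi₁.surjective hi₄ hi₅
end

section
/- Let I_W ⊆ ℚ[y,z] be the ideal generated by g₃ = 8y³ − 15y²z + 9yz² − 2z³, g₄ = y³z, and g₆ = y⁶. Then y⁵ ∉ I_W. -/
open MvPolynomial

/-- The variable `y` in `ℚ[y,z]`. -/
noncomputable def y : MvPolynomial (Fin 2) ℚ := X 0
/-- The variable `z` in `ℚ[y,z]`. -/
noncomputable def z : MvPolynomial (Fin 2) ℚ := X 1

/-- `g₃ = 8y³ − 15y²z + 9yz² − 2z³`. -/
noncomputable def g₃ : MvPolynomial (Fin 2) ℚ := 8*y^3 - 15*y^2*z + 9*y*z^2 - 2*z^3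
/-- `g₄ = y³z`. -/
noncomputable def g₄ : MvPolynomial (Fin 2) ℚ := y^3*z
/-- `g₆ = y⁶`. -/
noncomputable def g₆ : MvPolynomial (Fin 2) ℚ := y^6

/-- The ideal `I_W = ⟨g₃, g₄, g₆⟩` presenting `H^*(W;ℚ)`, the rational cohomology
of the variety `W` of complete conics on `ℙ²`. -/
noncomputable def I_W : Ideal (MvPolynomial (Fin 2) ℚ) := Ideal.span {g₃, g₄, g₆}

/-!
The integral over `W` is a linear functional on polynomials that sends `y⁵` to `1` and kills every
monomial multiple of `g₃`, `g₄` and `g₆`, hence the whole ideal `I_W`. Its values on monomials are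
integers, so the same functional works over every nontrivial commutative ring.
-/

theorem map_eq_zero_of_mem_ideal_span {A M F : Type*} [Semiring A] [AddCommMonoid M]
    [FunLike F A M] [AddMonoidHomClass F A M] (f : F) {S : Set A}
    (hf : ∀ g ∈ S, ∀ p, f (p * g) = 0) {x : A} (hx : x ∈ Ideal.span S) : f x = 0 := by
  induction hx using Submodule.closure_induction with
  | zero => exact map_zero f
  | add u v _ _ hu hv => rw [map_add, hu, hv, add_zero]
  | smul_mem p g hg => exact hf g hg p

theorem map_mul_eq_zero_of_basis {ι R A M : Type*} [CommSemiring R] [Semiring A] [Algebra R A]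
    [AddCommMonoid M] [Module R M] (b : Module.Basis ι R A) (f : A →ₗ[R] M) {g : A}
    (hf : ∀ i, f (b i * g) = 0) (p : A) : f (p * g) = 0 := by
  have comp_eq_zero : f ∘ₗ LinearMap.mulRight R g = 0 := b.ext hf
  exact LinearMap.congr_fun comp_eq_zero p

theorem basisMonomials_fin_two (R : Type*) [CommSemiring R] (d : Fin 2 →₀ ℕ) :
    basisMonomials (Fin 2) R d = X 0 ^ d 0 * X 1 ^ d 1 := by
  rw [coe_basisMonomials]
  simp [monomial_eq, Finsupp.prod_fintype]

/-- The intersection number `∫_W yᵃzᵇ`, which is zero unless `a + b = 5`. With `∫_W y⁵ = 1` given,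
the other values in degree 5 are forced: multiples of `g₄` give `y⁴z, y³z² ↦ 0`, and then `y²g₃`,
`yzg₃`, `z²g₃` determine in turn the values at `y²z³`, `yz⁴`, `z⁵`. -/
def intersectionNumber : ℕ → ℕ → ℤ
  | 5, 0 => 1
  | 2, 3 => 4
  | 1, 4 => 18
  | 0, 5 => 51
  | _, _ => 0

theorem intersectionNumber_recurrence (a b : ℕ) :
    8 * intersectionNumber (a + 3) b - 15 * intersectionNumber (a + 2) (b + 1)
      + 9 * intersectionNumber (a + 1) (b + 2) - 2 * intersectionNumber a (b + 3) = 0 := by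
  rcases a with _ | _ | _ | a <;> rcases b with _ | _ | _ | b <;> simp [intersectionNumber]

section ConicIntegral

variable (R : Type*) [CommRing R]

/-- Integration over `W` against the fundamental class, as a functional on `R[y,z]` with `y = X 0`
and `z = X 1`, specified by its values on monomials. -/
noncomputable def conicIntegral : MvPolynomial (Fin 2) R →ₗ[R] R :=
  (basisMonomials (Fin 2) R).constr R fun d ↦ (intersectionNumber (d 0) (d 1) : R)

theorem conicIntegral_X_pow_mul_X_pow (a b : ℕ) :
    conicIntegral R (X 0 ^ a * X 1 ^ b) = intersectionNumber a b := by
  let d : Fin 2 →₀ ℕ := Finsupp.equivFunOnFinite.symm ![a, b]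
  have monomial_d : X 0 ^ a * X 1 ^ b = basisMonomials (Fin 2) R d :=
    (basisMonomials_fin_two R d).symm
  rw [monomial_d, conicIntegral, Module.Basis.constr_basis]
  rfl

variable {R}

theorem conicIntegral_mul_eq_zero_of_monomials {g : MvPolynomial (Fin 2) R}
    (hg : ∀ a b : ℕ, conicIntegral R (X 0 ^ a * X 1 ^ b * g) = 0) (p : MvPolynomial (Fin 2) R) :
    conicIntegral R (p * g) = 0 :=
  map_mul_eq_zero_of_basis (basisMonomials (Fin 2) R) (conicIntegral R)
    (fun d ↦ by rw [basisMonomials_fin_two, hg]) p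

theorem conicIntegral_mul_cubic (p : MvPolynomial (Fin 2) R) :
    conicIntegral R
      (p * (8 * X 0 ^ 3 - 15 * X 0 ^ 2 * X 1 + 9 * X 0 * X 1 ^ 2 - 2 * X 1 ^ 3)) = 0 := by
  refine conicIntegral_mul_eq_zero_of_monomials (fun a b ↦ ?_) p
  have expand : (X 0 ^ a * X 1 ^ b *
      (8 * X 0 ^ 3 - 15 * X 0 ^ 2 * X 1 + 9 * X 0 * X 1 ^ 2 - 2 * X 1 ^ 3) :
        MvPolynomial (Fin 2) R) =
      (8 : ℤ) • (X 0 ^ (a + 3) * X 1 ^ b) - (15 : ℤ) • (X 0 ^ (a + 2) * X 1 ^ (b + 1))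
        + (9 : ℤ) • (X 0 ^ (a + 1) * X 1 ^ (b + 2)) - (2 : ℤ) • (X 0 ^ a * X 1 ^ (b + 3)) := by
    simp only [zsmul_eq_mul]
    push_cast
    ring
  rw [expand]
  simp only [map_add, map_sub, map_zsmul, conicIntegral_X_pow_mul_X_pow]
  simp only [zsmul_eq_mul]
  exact_mod_cast congrArg (Int.cast : ℤ → R) (intersectionNumber_recurrence a b)

theorem conicIntegral_mul_X_pow_three_mul_X (p : MvPolynomial (Fin 2) R) :
    conicIntegral R (p * (X 0 ^ 3 * X 1)) = 0 := by
  refine conicIntegral_mul_eq_zero_of_monomials (fun a b ↦ ?_) p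
  calc conicIntegral R (X 0 ^ a * X 1 ^ b * (X 0 ^ 3 * X 1))
      = conicIntegral R (X 0 ^ (a + 3) * X 1 ^ (b + 1)) := by ring_nf
    _ = 0 := by rw [conicIntegral_X_pow_mul_X_pow]; simp [intersectionNumber]

theorem conicIntegral_mul_X_pow_six (p : MvPolynomial (Fin 2) R) :
    conicIntegral R (p * X 0 ^ 6) = 0 := by
  refine conicIntegral_mul_eq_zero_of_monomials (fun a b ↦ ?_) p
  calc conicIntegral R (X 0 ^ a * X 1 ^ b * X 0 ^ 6)
      = conicIntegral R (X 0 ^ (a + 6) * X 1 ^ b) := by ring_nf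
    _ = 0 := by rw [conicIntegral_X_pow_mul_X_pow]; simp [intersectionNumber]

variable (R) in
theorem conicIntegral_X_pow_five : conicIntegral R (X 0 ^ 5) = 1 := by
  simpa [intersectionNumber] using conicIntegral_X_pow_mul_X_pow R 5 0

end ConicIntegral

theorem y_pow_five_not_mem_general (R : Type*) [CommRing R] [Nontrivial R] :
    (X 0 ^ 5 : MvPolynomial (Fin 2) R) ∉
      Ideal.span {8 * X 0 ^ 3 - 15 * X 0 ^ 2 * X 1 + 9 * X 0 * X 1 ^ 2 - 2 * X 1 ^ 3,
        X 0 ^ 3 * X 1, X 0 ^ 6} := by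
  intro hmem
  have integral_eq_zero : conicIntegral R (X 0 ^ 5) = 0 := by
    refine map_eq_zero_of_mem_ideal_span (conicIntegral R) ?_ hmem
    rintro g (rfl | rfl | rfl)
    · exact conicIntegral_mul_cubic
    · exact conicIntegral_mul_X_pow_three_mul_X
    · exact conicIntegral_mul_X_pow_six
  exact one_ne_zero ((conicIntegral_X_pow_five R).symm.trans integral_eq_zero)

/-- `y⁵ ∉ I_W`: the top characteristic `∫_W y⁵ = 1` is nonzero. -/
theorem y_pow_five_not_mem : y^5 ∉ I_W :=
  y_pow_five_not_mem_general ℚ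
end

section
/- Let I_W ⊆ ℚ[y,z] be the ideal generated by g₃ = 8y³ − 15y²z + 9yz² − 2z³, g₄ = y³z, and g₆ = y⁶. Then y²z³ − 4y⁵ ∈ I_W, yz⁴ − 18y⁵ ∈ I_W, and z⁵ − 51y⁵ ∈ I_W. -/
open MvPolynomial

/-!
In a commutative ring, let `p t³ = a s³ + b s² t + c s t²` and `s³ t = 0`. Multiplying the cubic
relation by `s²`, `s t` and `t²` successively reduces `s² t³`, `s t⁴` and `t⁵` to multiples of `s⁵`,
at the cost of one more factor `p` each time. The ring `ℚ[y,z]/I_W` has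
`(p, a, b, c) = (2, 8, -15, 9)`, where the powers of `2` cancel:
`8 / 2 = 4`, `9 * 8 / 2² = 18` and `(2 * (-15) + 9²) * 8 / 2³ = 51`.
-/

section CubicRelation

variable {A : Type*} [CommRing A] {p a b c s t : A}

theorem mul_sq_mul_cube_eq_of_cubic
    (cubic : p * t ^ 3 = a * s ^ 3 + b * s ^ 2 * t + c * s * t ^ 2) (cube_mul : s ^ 3 * t = 0) :
    p * (s ^ 2 * t ^ 3) = a * s ^ 5 := by
  linear_combination s ^ 2 * cubic + (b * s + c * t) * cube_mul

theorem sq_mul_mul_pow_four_eq_of_cubic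
    (cubic : p * t ^ 3 = a * s ^ 3 + b * s ^ 2 * t + c * s * t ^ 2) (cube_mul : s ^ 3 * t = 0) :
    p ^ 2 * (s * t ^ 4) = c * a * s ^ 5 := by
  have reduce : p * (s * t ^ 4) = c * (s ^ 2 * t ^ 3) := by
    linear_combination s * t * cubic + (a * s + b * t) * cube_mul
  linear_combination p * reduce + c * mul_sq_mul_cube_eq_of_cubic cubic cube_mul

theorem cube_mul_pow_five_eq_of_cubic
    (cubic : p * t ^ 3 = a * s ^ 3 + b * s ^ 2 * t + c * s * t ^ 2) (cube_mul : s ^ 3 * t = 0) :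
    p ^ 3 * t ^ 5 = (p * b + c ^ 2) * a * s ^ 5 := by
  have reduce : p * t ^ 5 = b * (s ^ 2 * t ^ 3) + c * (s * t ^ 4) := by
    linear_combination t ^ 2 * cubic + a * t * cube_mul
  linear_combination p ^ 2 * reduce + p * b * mul_sq_mul_cube_eq_of_cubic cubic cube_mul +
    c * sq_mul_mul_pow_four_eq_of_cubic cubic cube_mul

end CubicRelation

theorem isLeftRegular_ofNat_of_algebra_rat (A : Type*) [Semiring A] [Algebra ℚ A] (n : ℕ)
    [n.AtLeastTwo] : IsLeftRegular (OfNat.ofNat n : A) := by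
  have isUnit : IsUnit (OfNat.ofNat n : ℚ) := (OfNat.ofNat_ne_zero n).isUnit
  simpa only [map_ofNat] using (isUnit.map (algebraMap ℚ A)).isRegular.left

theorem characteristics_W_general {R : Type*} [CommRing R] {I : Ideal R}
    (two_regular : IsLeftRegular (2 : R ⧸ I)) {s t : R}
    (cubic_mem : 8 * s ^ 3 - 15 * s ^ 2 * t + 9 * s * t ^ 2 - 2 * t ^ 3 ∈ I)
    (cube_mul_mem : s ^ 3 * t ∈ I) :
    s ^ 2 * t ^ 3 - 4 * s ^ 5 ∈ I ∧ s * t ^ 4 - 18 * s ^ 5 ∈ I ∧ t ^ 5 - 51 * s ^ 5 ∈ I := by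
  simp only [← Ideal.Quotient.eq_zero_iff_mem, map_sub, map_add, map_mul, map_pow, map_ofNat,
    sub_eq_zero] at cubic_mem cube_mul_mem ⊢
  generalize Ideal.Quotient.mk I s = s at *
  generalize Ideal.Quotient.mk I t = t at *
  have cubic : 2 * t ^ 3 = 8 * s ^ 3 + (-15) * s ^ 2 * t + 9 * s * t ^ 2 := by
    linear_combination -cubic_mem
  refine ⟨two_regular ?_, two_regular.pow 2 ?_, two_regular.pow 3 ?_⟩
  · linear_combination mul_sq_mul_cube_eq_of_cubic cubic cube_mul_mem
  · linear_combination sq_mul_mul_pow_four_eq_of_cubic cubic cube_mul_mem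
  · linear_combination cube_mul_pow_five_eq_of_cubic cubic cube_mul_mem

/-- `∫_W y²z³ = 4`, `∫_W yz⁴ = 18`, `∫_W z⁵ = 51`. -/
theorem characteristics_W :
    y^2*z^3 - 4*y^5 ∈ I_W ∧ y*z^4 - 18*y^5 ∈ I_W ∧ z^5 - 51*y^5 ∈ I_W :=
  characteristics_W_general (isLeftRegular_ofNat_of_algebra_rat _ 2)
    (Ideal.subset_span (.inl rfl)) (Ideal.subset_span (.inr (.inl rfl)))
end

section
/- Let I_W ⊆ ℚ[y,z] be the ideal generated by g₃ = 8y³ − 15y²z + 9yz² − 2z³, g₄ = y³z, and g₆ = y⁶. Then (6y − 2z)⁵ − 3264·y⁵ ∈ I_W. -/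
open MvPolynomial

/-!
Write `μ = y` for the class of conics through a point and `c = 6y - 2z` for the class of conics
tangent to a conic. In terms of `μ` and `c` the relation `4 g₃ = 0` is monic in `c`, namely
`c³ = 9μc² - 30μ²c + 40μ³`, and `2 g₄ = 0` becomes `μ³c = 6μ⁴`. Hence the numbers `N k` of conics
through `5 - k` points and tangent to `k` conics, given by `μ^(5 - k) c^k = N k μ⁵`, satisfy
`N (k + 3) = 9 N (k + 2) - 30 N (k + 1) + 40 N k` with initial values `1, 6, 36`, and the recursion
continues with `184, 816, 3264`. No division occurs, so the argument works over any commutative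
ring.
-/

namespace CompleteConics

variable {R : Type*} [CommRing R]

section TangencyNumbers

variable {μ c : R}

lemma pow_four_mul_eq (hquartic : μ ^ 3 * c = 6 * μ ^ 4) : μ ^ 4 * c = 6 * μ ^ 5 := by
  linear_combination μ * hquartic

lemma pow_three_mul_sq_eq (hquartic : μ ^ 3 * c = 6 * μ ^ 4) : μ ^ 3 * c ^ 2 = 36 * μ ^ 5 :=
  calc
    μ ^ 3 * c ^ 2 = 6 * (μ ^ 4 * c) := by linear_combination c * hquartic
    _ = 6 * (6 * μ ^ 5) := by rw [pow_four_mul_eq hquartic]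
    _ = 36 * μ ^ 5 := by ring

lemma sq_mul_pow_three_eq (hcubic : c ^ 3 = 9 * μ * c ^ 2 - 30 * μ ^ 2 * c + 40 * μ ^ 3)
    (hquartic : μ ^ 3 * c = 6 * μ ^ 4) : μ ^ 2 * c ^ 3 = 184 * μ ^ 5 :=
  calc
    μ ^ 2 * c ^ 3 = 9 * (μ ^ 3 * c ^ 2) - 30 * (μ ^ 4 * c) + 40 * μ ^ 5 := by
      linear_combination μ ^ 2 * hcubic
    _ = 9 * (36 * μ ^ 5) - 30 * (6 * μ ^ 5) + 40 * μ ^ 5 := by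
      rw [pow_three_mul_sq_eq hquartic, pow_four_mul_eq hquartic]
    _ = 184 * μ ^ 5 := by ring

lemma mul_pow_four_eq (hcubic : c ^ 3 = 9 * μ * c ^ 2 - 30 * μ ^ 2 * c + 40 * μ ^ 3)
    (hquartic : μ ^ 3 * c = 6 * μ ^ 4) : μ * c ^ 4 = 816 * μ ^ 5 :=
  calc
    μ * c ^ 4 = 9 * (μ ^ 2 * c ^ 3) - 30 * (μ ^ 3 * c ^ 2) + 40 * (μ ^ 4 * c) := by
      linear_combination μ * c * hcubic
    _ = 9 * (184 * μ ^ 5) - 30 * (36 * μ ^ 5) + 40 * (6 * μ ^ 5) := by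
      rw [sq_mul_pow_three_eq hcubic hquartic, pow_three_mul_sq_eq hquartic,
        pow_four_mul_eq hquartic]
    _ = 816 * μ ^ 5 := by ring

lemma pow_five_eq (hcubic : c ^ 3 = 9 * μ * c ^ 2 - 30 * μ ^ 2 * c + 40 * μ ^ 3)
    (hquartic : μ ^ 3 * c = 6 * μ ^ 4) : c ^ 5 = 3264 * μ ^ 5 :=
  calc
    c ^ 5 = 9 * (μ * c ^ 4) - 30 * (μ ^ 2 * c ^ 3) + 40 * (μ ^ 3 * c ^ 2) := by
      linear_combination c ^ 2 * hcubic
    _ = 9 * (816 * μ ^ 5) - 30 * (184 * μ ^ 5) + 40 * (36 * μ ^ 5) := by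
      rw [mul_pow_four_eq hcubic hquartic, sq_mul_pow_three_eq hcubic hquartic,
        pow_three_mul_sq_eq hquartic]
    _ = 3264 * μ ^ 5 := by ring

end TangencyNumbers

section Relations

variable {u v : R}

lemma six_mul_sub_two_mul_pow_three_eq
    (hcubic : 8 * u ^ 3 - 15 * u ^ 2 * v + 9 * u * v ^ 2 - 2 * v ^ 3 = 0) :
    (6 * u - 2 * v) ^ 3 =
      9 * u * (6 * u - 2 * v) ^ 2 - 30 * u ^ 2 * (6 * u - 2 * v) + 40 * u ^ 3 := by
  linear_combination 4 * hcubic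

lemma pow_three_mul_six_mul_sub_two_mul_eq (hquartic : u ^ 3 * v = 0) :
    u ^ 3 * (6 * u - 2 * v) = 6 * u ^ 4 := by
  linear_combination -2 * hquartic

end Relations

end CompleteConics

open CompleteConics in
theorem five_conic_general {R : Type*} [CommRing R] {I : Ideal R} {u v : R}
    (hcubic : 8 * u ^ 3 - 15 * u ^ 2 * v + 9 * u * v ^ 2 - 2 * v ^ 3 ∈ I)
    (hquartic : u ^ 3 * v ∈ I) : (6 * u - 2 * v) ^ 5 - 3264 * u ^ 5 ∈ I := by
  rw [← Ideal.Quotient.eq_zero_iff_mem] at hcubic hquartic ⊢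
  simp only [map_sub, map_add, map_mul, map_pow, map_ofNat] at hcubic hquartic ⊢
  exact sub_eq_zero.mpr <| pow_five_eq (six_mul_sub_two_mul_pow_three_eq hcubic)
    (pow_three_mul_six_mul_sub_two_mul_eq hquartic)

lemma g₃_mem_I_W : g₃ ∈ I_W := Ideal.subset_span (by simp)

lemma g₄_mem_I_W : g₄ ∈ I_W := Ideal.subset_span (by simp)

/-- The five-conic problem: `∫_W (6y−2z)⁵ = 3264`. -/
theorem five_conic : (6*y - 2*z)^5 - 3264*y^5 ∈ I_W :=
  five_conic_general g₃_mem_I_W g₄_mem_I_W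
end
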